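/- arXiv:1712.03546 — 2 statements merged into one kernel-verified Lean document; each statement's English description precedes it below -/
import Mathlib

section
/- Let f be a homogeneous polynomial of degree 3 in n variables over ℂ, and let p, q ∈ ℂⁿ be two singular points of the hypersurface {f = 0}, i.e. f and all its partial derivatives vanish at both p and q. Then f vanishes identically on the span of p and q: f(s·p + t·q) = 0 for all s, t ∈ ℂ. (In particular, any line passing through two singular points of a cubic hypersurface is contained in the hypersurface.) -/
open MvPolynomial

/-!
The restriction `F(S, T) = f(S p + T q)` is a binary cubic form. Expanding `f` to first order
around the singular point `S p` shows that `T ^ 2` divides `F`; by symmetry so does `S ^ 2`. Every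
monomial of `F` then has degree at least `4`, so `F = 0`.
-/

section Divisibility

variable {σ R : Type*} [CommSemiring R] {φ : MvPolynomial σ R}

theorem le_apply_of_X_pow_dvd {i : σ} {k : ℕ} (h : X i ^ k ∣ φ) {m : σ →₀ ℕ}
    (hm : m ∈ φ.support) : k ≤ m i := by
  rw [X_pow_eq_monomial, monomial_one_dvd_iff_modMonomial_eq_zero] at h
  by_contra hlt
  refine mem_support_iff.mp hm ?_
  rw [← coeff_modMonomial_of_not_le φ (mt Finsupp.single_le_iff.mp hlt), h, coeff_zero]

theorem eq_zero_of_X_pow_dvd_of_X_pow_dvd {i j : σ} (hij : i ≠ j) {a b : ℕ}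
    (hi : X i ^ a ∣ φ) (hj : X j ^ b ∣ φ) (hφ : φ.totalDegree < a + b) : φ = 0 := by
  classical
  rw [← support_eq_empty, Finset.eq_empty_iff_forall_notMem]
  intro m hm
  have le_degree : m i + m j ≤ m.degree := by
    rw [← Finset.sum_pair hij, Finsupp.degree_apply]
    exact Finset.sum_le_sum_of_ne_zero fun l _ hl => Finsupp.mem_support_iff.mpr hl
  have degree_le : m.degree ≤ φ.totalDegree := le_totalDegree hm
  have := le_apply_of_X_pow_dvd hi hm
  have := le_apply_of_X_pow_dvd hj hm
  omega

end Divisibility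

section Evaluation

variable {σ R : Type*} [CommSemiring R]

theorem eval_smul_of_isHomogeneous {f : MvPolynomial σ R} {d : ℕ} (hf : f.IsHomogeneous d)
    (c : R) (x : σ → R) : eval (c • x) f = c ^ d * eval x f := by
  rw [eval_eq, eval_eq, Finset.mul_sum]
  refine Finset.sum_congr rfl fun m hm => ?_
  simp only [Pi.smul_apply, smul_eq_mul, mul_pow, Finset.prod_mul_distrib,
    Finset.prod_pow_eq_pow_sum, hf.degree_eq_sum_deg_support hm]
  exact mul_left_comm _ _ _

theorem derivation_apply_eq_sum_pderiv_smul {A : Type*} [AddCommMonoid A] [Module R A]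
    [Module (MvPolynomial σ R) A] [IsScalarTower R (MvPolynomial σ R) A]
    (D : Derivation R (MvPolynomial σ R) A) (f : MvPolynomial σ R) :
    D f = ∑ i ∈ f.vars, pderiv i f • D (X i) := by
  classical
  let E : Derivation R (MvPolynomial σ R) A :=
    ∑ i ∈ f.vars, (LinearMap.toSpanSingleton (MvPolynomial σ R) A (D (X i))).compDer (pderiv i)
  have E_apply (g : MvPolynomial σ R) : E g = ∑ i ∈ f.vars, pderiv i g • D (X i) := by
    rw [← Derivation.coeFnAddMonoidHom_apply, map_sum, Finset.sum_apply]
    rfl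
  rw [← E_apply]
  refine derivation_eq_of_forall_mem_vars fun j hj => ?_
  simp [E_apply, pderiv_X, Pi.single_apply, hj]

theorem exists_eval_add_smul_eq (f : MvPolynomial σ R) (x y : σ → R) (e : R) :
    ∃ r, eval (x + e • y) f =
      eval x f + e * eval x (mkDerivation R (fun i => C (y i)) f) + e ^ 2 * r := by
  induction f using MvPolynomial.induction_on with
  | C a => exact ⟨0, by simp⟩
  | add f g hf hg =>
    obtain ⟨r, hr⟩ := hf
    obtain ⟨s, hs⟩ := hg
    refine ⟨r + s, ?_⟩
    simp only [map_add, hr, hs]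
    ring
  | mul_X f i hf =>
    obtain ⟨r, hr⟩ := hf
    refine ⟨eval x (mkDerivation R (fun i => C (y i)) f) * y i + r * (x i + e * y i), ?_⟩
    simp only [map_mul, map_add, hr, eval_X, eval_C, Derivation.leibniz, mkDerivation_X,
      Pi.add_apply, Pi.smul_apply, smul_eq_mul]
    ring

end Evaluation

/-- `p` is a singular point of the hypersurface `f = 0`: the polynomial and all its first partial
derivatives vanish there. The point `p = 0` of the affine cone is not excluded. -/
def IsSingularPoint {σ R : Type*} [CommSemiring R] (f : MvPolynomial σ R) (p : σ → R) : Prop :=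
  eval p f = 0 ∧ ∀ i, eval p (pderiv i f) = 0

namespace IsSingularPoint

variable {σ R S : Type*} [CommSemiring R] [CommSemiring S] {f : MvPolynomial σ R} {p : σ → R}

theorem map (hp : IsSingularPoint f p) (φ : R →+* S) :
    IsSingularPoint (MvPolynomial.map φ f) (φ ∘ p) := by
  refine ⟨?_, fun i => ?_⟩
  · rw [← map_eval, hp.1, map_zero]
  · rw [pderiv_map, ← map_eval, hp.2, map_zero]

theorem smul (hp : IsSingularPoint f p) {d : ℕ} (hf : f.IsHomogeneous d) (c : R) :
    IsSingularPoint f (c • p) := by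
  refine ⟨?_, fun i => ?_⟩
  · rw [eval_smul_of_isHomogeneous hf, hp.1, mul_zero]
  · rw [eval_smul_of_isHomogeneous hf.pderiv, hp.2, mul_zero]

theorem eval_derivation_eq_zero (hp : IsSingularPoint f p)
    (D : Derivation R (MvPolynomial σ R) (MvPolynomial σ R)) : eval p (D f) = 0 := by
  rw [derivation_apply_eq_sum_pderiv_smul, map_sum]
  exact Finset.sum_eq_zero fun i _ => by rw [smul_eq_mul, map_mul, hp.2, zero_mul]

theorem sq_dvd_eval_add_smul (hp : IsSingularPoint f p) (y : σ → R) (e : R) :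
    e ^ 2 ∣ eval (p + e • y) f := by
  obtain ⟨r, hr⟩ := exists_eval_add_smul_eq f p y e
  rw [hp.1, hp.eval_derivation_eq_zero, mul_zero, zero_add, zero_add] at hr
  exact ⟨r, hr⟩

end IsSingularPoint

section RestrictToSpan

variable {σ R : Type*} [CommSemiring R]

/-- The binary form `f(S p + T q)` in the variables `S = X 0` and `T = X 1`. It is the restriction
of `f` to the span of `p` and `q`, written as an evaluation over the ring of binary forms. -/
noncomputable def restrictToSpan (p q : σ → R) (f : MvPolynomial σ R) : MvPolynomial (Fin 2) R :=
  eval ((X 0 : MvPolynomial (Fin 2) R) • (C ∘ p) + (X 1 : MvPolynomial (Fin 2) R) • (C ∘ q))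
    (map C f)

theorem eval_restrictToSpan (p q : σ → R) (f : MvPolynomial σ R) (s t : R) :
    eval ![s, t] (restrictToSpan p q f) = eval (s • p + t • q) f := by
  have eval_comp_C : (eval ![s, t]).comp C = RingHom.id R := RingHom.ext fun r => eval_C r
  have point_eq : eval ![s, t] ∘ ((X 0 : MvPolynomial (Fin 2) R) • (C ∘ p) +
      (X 1 : MvPolynomial (Fin 2) R) • (C ∘ q)) = s • p + t • q := by
    ext i
    simp
  rw [restrictToSpan, map_eval, map_map, eval_comp_C, map_id, point_eq]

theorem isHomogeneous_restrictToSpan (p q : σ → R) {f : MvPolynomial σ R} {d : ℕ}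
    (hf : f.IsHomogeneous d) : (restrictToSpan p q f).IsHomogeneous d := by
  rw [restrictToSpan, eval_map, ← one_mul d]
  exact hf.eval₂ C _ (isHomogeneous_C _) fun i =>
    ((isHomogeneous_X R 0).mul (isHomogeneous_C _ (p i))).add
      ((isHomogeneous_X R 1).mul (isHomogeneous_C _ (q i)))

variable {f : MvPolynomial σ R} {d : ℕ} {p q : σ → R}

theorem X_one_sq_dvd_restrictToSpan (hf : f.IsHomogeneous d) (hp : IsSingularPoint f p)
    (q : σ → R) : X 1 ^ 2 ∣ restrictToSpan p q f :=
  ((hp.map C).smul (hf.map C) (X 0)).sq_dvd_eval_add_smul (C ∘ q) (X 1)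

theorem X_zero_sq_dvd_restrictToSpan (hf : f.IsHomogeneous d) (hq : IsSingularPoint f q)
    (p : σ → R) : X 0 ^ 2 ∣ restrictToSpan p q f := by
  rw [restrictToSpan, add_comm]
  exact ((hq.map C).smul (hf.map C) (X 1)).sq_dvd_eval_add_smul (C ∘ p) (X 0)

theorem restrictToSpan_eq_zero (hf : f.IsHomogeneous d) (hd : d < 4) (hp : IsSingularPoint f p)
    (hq : IsSingularPoint f q) : restrictToSpan p q f = 0 :=
  eq_zero_of_X_pow_dvd_of_X_pow_dvd zero_ne_one (X_zero_sq_dvd_restrictToSpan hf hq p)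
    (X_one_sq_dvd_restrictToSpan hf hp q)
    ((isHomogeneous_restrictToSpan p q hf).totalDegree_le.trans_lt hd)

end RestrictToSpan

theorem cubic_vanishes_on_line_through_two_singular_points_general
    {σ R : Type*} [CommSemiring R] {f : MvPolynomial σ R} {d : ℕ} (hf : f.IsHomogeneous d)
    (hd : d < 4) {p q : σ → R} (hp : IsSingularPoint f p) (hq : IsSingularPoint f q) (s t : R) :
    eval (s • p + t • q) f = 0 := by
  rw [← eval_restrictToSpan, restrictToSpan_eq_zero hf hd hp hq, map_zero]

/-- If `p` and `q` are singular points of the cubic hypersurface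
`{f = 0}`, then `f` vanishes identically on the span of `p` and `q`; in
particular the line through two singular points of a cubic lies on the cubic. -/
theorem cubic_vanishes_on_line_through_two_singular_points
    (n : ℕ) (f : MvPolynomial (Fin n) ℂ) (hf : f.IsHomogeneous 3)
    (p q : Fin n → ℂ)
    (hp : eval p f = 0 ∧ ∀ i : Fin n, eval p (pderiv i f) = 0)
    (hq : eval q f = 0 ∧ ∀ i : Fin n, eval q (pderiv i f) = 0) :
    ∀ s t : ℂ, eval (s • p + t • q) f = 0 :=
  cubic_vanishes_on_line_through_two_singular_points_general hf (by norm_num) hp hq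
end

section
/- Let f2 and f3 be homogeneous polynomials of degrees 2 and 3 in the variables x0,...,x4 over ℂ, regarded as polynomials in x0,...,x5 not involving x5, and set f = x5·f2 + f3. Let W ⊆ ℂ⁶ be a 2-dimensional linear subspace containing e5 = (0,0,0,0,0,1) on which f vanishes identically. Then there exists a nonzero v ∈ ℂ⁵ with f2(v) = 0 and f3(v) = 0 such that W is the span of (v,0) and e5; moreover such v is unique up to a nonzero scalar multiple. -/
open MvPolynomial

/-! Cut the plane `W` with the hyperplane `x₅ = 0`, which misses `e₅`: the intersection is a line
`ℂ · (v, 0)`, so `W` is spanned by `(v, 0)` and `e₅`. Since `W` determines this intersection, `v` is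
unique up to scaling. All points `(v, t)` lie in `W`, where `0 = f (v, t) = t * f₂ v + f₃ v`; taking
`t = 0` and `t = 1` gives `f₃ v = 0` and `f₂ v = 0`. -/

section Hyperplane

variable {K V : Type*} [Field K] [AddCommGroup V] [Module K V]
  {φ : V →ₗ[K] K} {e : V} {W : Submodule K V}

theorem disjoint_span_singleton_ker (hφe : φ e ≠ 0) :
    Disjoint (Submodule.span K {e}) (LinearMap.ker φ) := by
  rw [LinearMap.disjoint_ker]
  intro x hx hφx
  obtain ⟨a, rfl⟩ := Submodule.mem_span_singleton.mp hx
  have ha : a = 0 := by simpa [hφe] using hφx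
  rw [ha, zero_smul]

theorem inf_ker_sup_span_singleton (hφe : φ e ≠ 0) (he : e ∈ W) :
    W ⊓ LinearMap.ker φ ⊔ Submodule.span K {e} = W := by
  have he' : Submodule.span K {e} ≤ W := (Submodule.span_singleton_le_iff_mem e W).mpr he
  rw [inf_sup_assoc_of_le _ he', sup_comm, φ.span_singleton_sup_ker_eq_top hφe, inf_top_eq]

theorem finrank_inf_ker_add_one [FiniteDimensional K W] (hφe : φ e ≠ 0) (he : e ∈ W) :
    Module.finrank K ↥(W ⊓ LinearMap.ker φ) + 1 = Module.finrank K W := by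
  have hne : φ.domRestrict W ≠ 0 := fun h => hφe (LinearMap.congr_fun h ⟨e, he⟩)
  rw [← Module.Dual.finrank_ker_add_one_of_ne_zero hne, LinearMap.ker_domRestrict,
    ← Submodule.map_comap_subtype, Submodule.finrank_map_subtype_eq]

theorem span_pair_inf_ker (hφe : φ e ≠ 0) {w : V} (hw : φ w = 0) :
    Submodule.span K {w, e} ⊓ LinearMap.ker φ = Submodule.span K {w} := by
  have hw' : Submodule.span K {w} ≤ LinearMap.ker φ :=
    (Submodule.span_singleton_le_iff_mem w _).mpr hw
  rw [Submodule.span_insert, sup_inf_assoc_of_le _ hw', (disjoint_span_singleton_ker hφe).eq_bot,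
    sup_bot_eq]

theorem exists_eq_span_pair_of_finrank_eq_two (hW : Module.finrank K W = 2) (hφe : φ e ≠ 0)
    (he : e ∈ W) : ∃ w : V, w ≠ 0 ∧ φ w = 0 ∧ W = Submodule.span K {w, e} := by
  have : FiniteDimensional K W := Module.finite_of_finrank_eq_succ hW
  have hline : Module.finrank K ↥(W ⊓ LinearMap.ker φ) = 1 := by
    have := finrank_inf_ker_add_one hφe he
    omega
  obtain ⟨⟨w, hw⟩, hw0, hmul⟩ := finrank_eq_one_iff'.mp hline
  have hspan : W ⊓ LinearMap.ker φ = Submodule.span K {w} := by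
    refine le_antisymm (fun x hx => ?_) ((Submodule.span_singleton_le_iff_mem w _).mpr hw)
    obtain ⟨c, hc⟩ := hmul ⟨x, hx⟩
    exact Submodule.mem_span_singleton.mpr ⟨c, congrArg Subtype.val hc⟩
  refine ⟨w, fun h => hw0 (Subtype.ext h), hw.2, ?_⟩
  rw [Submodule.span_insert, ← hspan, inf_ker_sup_span_singleton hφe he]

theorem exists_eq_smul_of_span_pair_eq (hφe : φ e ≠ 0) {w w' : V} (hw : φ w = 0) (hw' : φ w' = 0)
    (h : Submodule.span K {w, e} = Submodule.span K {w', e}) : ∃ c : K, c ≠ 0 ∧ w' = c • w := by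
  have hspan : Submodule.span K {w} = Submodule.span K {w'} := by
    rw [← span_pair_inf_ker hφe hw, h, span_pair_inf_ker hφe hw']
  obtain ⟨c, hc⟩ := Submodule.span_singleton_eq_span_singleton.mp hspan
  exact ⟨c, c.ne_zero, hc.symm⟩

end Hyperplane

section Snoc

variable {R : Type*} {n : ℕ}

theorem snoc_smul_zero [MulZeroClass R] (c : R) (v : Fin n → R) :
    (Fin.snoc (c • v) 0 : Fin (n + 1) → R) = c • (Fin.snoc v 0 : Fin (n + 1) → R) := by
  ext i
  cases i using Fin.lastCases <;> simp

theorem snoc_zero_add_single_last [AddMonoid R] (v : Fin n → R) (t : R) :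
    (Fin.snoc v 0 : Fin (n + 1) → R) + Pi.single (Fin.last n) t = Fin.snoc v t := by
  ext i
  cases i using Fin.lastCases <;> simp

variable [CommSemiring R]

theorem eval_snoc_X_last_mul_rename_add_rename (g h : MvPolynomial (Fin n) R) (v : Fin n → R)
    (t : R) :
    eval (Fin.snoc v t : Fin (n + 1) → R)
        (X (Fin.last n) * rename Fin.castSucc g + rename Fin.castSucc h) =
      t * eval v g + eval v h := by
  simp [eval_rename]

theorem eval_eq_zero_of_forall_mem_eval_eq_zero {g h : MvPolynomial (Fin n) R}
    {W : Submodule R (Fin (n + 1) → R)} (he : Pi.single (Fin.last n) 1 ∈ W)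
    (hvanish : ∀ u ∈ W,
      eval u (X (Fin.last n) * rename Fin.castSucc g + rename Fin.castSucc h) = 0)
    {v : Fin n → R} (hv : (Fin.snoc v 0 : Fin (n + 1) → R) ∈ W) :
    eval v g = 0 ∧ eval v h = 0 := by
  have hv₁ : (Fin.snoc v 1 : Fin (n + 1) → R) ∈ W :=
    snoc_zero_add_single_last v 1 ▸ W.add_mem hv he
  have hh : eval v h = 0 := by
    simpa [eval_snoc_X_last_mul_rename_add_rename] using hvanish _ hv
  have hg : eval v g = 0 := by
    simpa [eval_snoc_X_last_mul_rename_add_rename, hh] using hvanish _ hv₁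
  exact ⟨hg, hh⟩

end Snoc

section Planes

variable {K : Type*} [Field K] {n : ℕ} {W : Submodule K (Fin (n + 1) → K)}

theorem exists_eq_span_snoc_zero_single_last (hdim : Module.finrank K W = 2)
    (he : Pi.single (Fin.last n) 1 ∈ W) :
    ∃ v : Fin n → K, v ≠ 0 ∧
      W = Submodule.span K {(Fin.snoc v 0 : Fin (n + 1) → K), Pi.single (Fin.last n) 1} := by
  obtain ⟨w, hw, hlast, hspan⟩ := exists_eq_span_pair_of_finrank_eq_two
    (φ := LinearMap.proj (Fin.last n)) hdim (by simp) he
  have hsnoc : (Fin.snoc (Fin.init w) 0 : Fin (n + 1) → K) = w := by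
    rw [← show w (Fin.last n) = 0 from hlast, Fin.snoc_init_self]
  refine ⟨Fin.init w, fun hinit => hw ?_, by rwa [hsnoc]⟩
  rw [← hsnoc, hinit]
  ext i
  cases i using Fin.lastCases <;> simp

theorem exists_eq_smul_of_span_snoc_zero_single_last_eq {v v' : Fin n → K}
    (h : Submodule.span K {(Fin.snoc v 0 : Fin (n + 1) → K), Pi.single (Fin.last n) 1} =
      Submodule.span K {(Fin.snoc v' 0 : Fin (n + 1) → K), Pi.single (Fin.last n) 1}) :
    ∃ c : K, c ≠ 0 ∧ v' = c • v := by
  obtain ⟨c, hc, hsmul⟩ := exists_eq_smul_of_span_pair_eq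
    (φ := LinearMap.proj (Fin.last n)) (by simp) (by simp) (by simp) h
  rw [← snoc_smul_zero] at hsmul
  exact ⟨c, hc, (Fin.snoc_injective2 (α := fun _ => K) hsmul).1⟩

theorem planes_through_singular_point_classification_general (g h : MvPolynomial (Fin n) K)
    (hdim : Module.finrank K W = 2) (he : Pi.single (Fin.last n) 1 ∈ W)
    (hvanish : ∀ u ∈ W,
      eval u (X (Fin.last n) * rename Fin.castSucc g + rename Fin.castSucc h) = 0) :
    ∃ v : Fin n → K, v ≠ 0 ∧ eval v g = 0 ∧ eval v h = 0 ∧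
      W = Submodule.span K {(Fin.snoc v 0 : Fin (n + 1) → K), Pi.single (Fin.last n) 1} ∧
      ∀ v' : Fin n → K,
        W = Submodule.span K {(Fin.snoc v' 0 : Fin (n + 1) → K), Pi.single (Fin.last n) 1} →
        ∃ c : K, c ≠ 0 ∧ v' = c • v := by
  obtain ⟨v, hv, hspan⟩ := exists_eq_span_snoc_zero_single_last hdim he
  have hvW : (Fin.snoc v 0 : Fin (n + 1) → K) ∈ W :=
    hspan ▸ Submodule.subset_span (Set.mem_insert _ _)
  obtain ⟨hg, hh⟩ := eval_eq_zero_of_forall_mem_eval_eq_zero he hvanish hvW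
  exact ⟨v, hv, hg, hh, hspan, fun v' hspan' =>
    exists_eq_smul_of_span_snoc_zero_single_last_eq (hspan.symm.trans hspan')⟩

end Planes

/-- For `f = x₅·f₂ + f₃` as before, every 2-dimensional linear
subspace `W ⊆ ℂ⁶` containing `e₅` on which `f` vanishes identically is the
span of `(v,0)` and `e₅` for some nonzero `v ∈ ℂ⁵` with `f₂(v) = f₃(v) = 0`,
and such `v` is unique up to a nonzero scalar. -/
theorem planes_through_singular_point_classification
    (f2 f3 : MvPolynomial (Fin 5) ℂ)
    (hf2 : f2.IsHomogeneous 2) (hf3 : f3.IsHomogeneous 3)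
    (f : MvPolynomial (Fin 6) ℂ)
    (hf : f = X 5 * rename Fin.castSucc f2 + rename Fin.castSucc f3)
    (e5 : Fin 6 → ℂ) (he5 : e5 = fun i => if i = 5 then 1 else 0)
    (W : Submodule ℂ (Fin 6 → ℂ))
    (hdim : Module.finrank ℂ W = 2)
    (he5W : e5 ∈ W)
    (hvanish : ∀ u ∈ W, eval u f = 0) :
    ∃ v : Fin 5 → ℂ, v ≠ 0 ∧ eval v f2 = 0 ∧ eval v f3 = 0 ∧
      W = Submodule.span ℂ {(Fin.snoc v 0 : Fin 6 → ℂ), e5} ∧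
      ∀ v' : Fin 5 → ℂ, v' ≠ 0 → eval v' f2 = 0 → eval v' f3 = 0 →
        W = Submodule.span ℂ {(Fin.snoc v' 0 : Fin 6 → ℂ), e5} →
        ∃ c : ℂ, c ≠ 0 ∧ v' = c • v := by
  obtain rfl : e5 = Pi.single (Fin.last 5) 1 :=
    he5.trans (funext fun i => (Pi.single_apply _ _ i).symm)
  obtain ⟨v, hv, hv2, hv3, hspan, huniq⟩ :=
    planes_through_singular_point_classification_general f2 f3 hdim he5W (hf ▸ hvanish)
  exact ⟨v, hv, hv2, hv3, hspan, fun v' _ _ _ => huniq v'⟩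
end
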